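/- For i = 1,2,3 let ℓ_i > 0 and h_i > 0 be constants, and let (μ₀, (w₁, w₂, w₃)) be an eigenpair of the constant-coefficient limit spectral problem on the star graph, normalized by Σ_{i=1}^{3} h_i² ∫₀^{ℓ_i} (w_i′(x))² dx = 1. Let κ ≥ 0, and suppose ν ∈ ℝ and twice continuously differentiable functions v_i : [0, ℓ_i] → ℝ satisfy: −v_i″(x) − μ₀ v_i(x) = ν w_i(x) on [0, ℓ_i]; v_i(ℓ_i) = 0; v₁(0) = v₂(0) = v₃(0); and Σ_{i=1}^{3} h_i² v_i′(0) = −κ μ₀ w₁(0). Then ν = −κ (μ₀ w₁(0))². -/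

import Mathlib

open Set

/-- An eigenpair `(μ, (w₁, w₂, w₃))` of the constant-coefficient limit spectral
problem on the star graph: `w_i″ = -μ w_i` on `[0, ℓ i]`, `w i (ℓ i) = 0`, the
values at the vertex agree, and the Kirchhoff condition `∑ h_i² w_i′(0) = 0`
holds. -/
def IsConstEigenpair (ℓ h : Fin 3 → ℝ) (μ : ℝ) (w : Fin 3 → ℝ → ℝ) : Prop :=
  (∀ i, ContDiff ℝ 2 (w i)) ∧
  (∃ i, ∃ x ∈ Icc 0 (ℓ i), w i x ≠ 0) ∧
  (∀ i, ∀ x ∈ Icc 0 (ℓ i), deriv (deriv (w i)) x = -μ * w i x) ∧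
  (∀ i, w i (ℓ i) = 0) ∧
  (w 0 0 = w 1 0 ∧ w 1 0 = w 2 0) ∧
  (∑ i, (h i) ^ 2 * deriv (w i) 0 = 0)

/-!
The formula is the Fredholm solvability condition of the corrector problem. Integrating by parts
along the edges, the vertex and Dirichlet conditions turn the problem `-u″ - μ u = f` with total
flux `c` at the vertex into its weak form `⟨u′, φ′⟩ = μ ⟨u, φ⟩ + ⟨f, φ⟩ - c φ(0)`, for weighted
`L²` products over the graph. Testing the eigenfunction `w` with itself gives
`μ ⟨w, w⟩ = ⟨w′, w′⟩ = 1`. Testing the equation of `w` with `v` and that of `v` with `w`, the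
symmetric terms cancel and `ν ⟨w, w⟩ = c w(0)` remains; multiply by `μ`.
-/

section StarGraph

variable {ι : Type*} [Fintype ι] {ℓ m : ι → ℝ} {μ ν a b c : ℝ} {f u v w φ : ι → ℝ → ℝ}

/-- The `L²` product of functions on a star graph whose edges `[0, ℓ i]` share the vertex `0` and
carry the weights `m i`. A function on the graph is a family of functions on `ℝ`, one for each
edge. -/
noncomputable def starInner (ℓ m : ι → ℝ) (f g : ι → ℝ → ℝ) : ℝ :=
  ∑ i, m i * ∫ x in (0 : ℝ)..ℓ i, f i x * g i x

/-- `u` solves `-u″ - μ u = f` on the edges of the star graph, vanishes at the outer ends, takes the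
common value `a` at the vertex, and has total weighted flux `c` out of the vertex. An eigenfunction
is the case `f = 0`, `c = 0`. Edges are unordered intervals, so `ℓ i` may have either sign. -/
structure IsStarSolution (ℓ m : ι → ℝ) (μ : ℝ) (f : ι → ℝ → ℝ) (a c : ℝ) (u : ι → ℝ → ℝ) :
    Prop where
  contDiff : ∀ i, ContDiff ℝ 2 (u i)
  ode : ∀ i, ∀ x ∈ uIcc 0 (ℓ i), -(deriv (deriv (u i)) x) - μ * u i x = f i x
  end_eq_zero : ∀ i, u i (ℓ i) = 0
  vertex_eq : ∀ i, u i 0 = a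
  flux_eq : ∑ i, m i * deriv (u i) 0 = c

lemma starInner_comm (ℓ m : ι → ℝ) (f g : ι → ℝ → ℝ) :
    starInner ℓ m f g = starInner ℓ m g f := by
  simp only [starInner, mul_comm]

lemma starInner_smul_left (ℓ m : ι → ℝ) (r : ℝ) (f g : ι → ℝ → ℝ) :
    starInner ℓ m (r • f) g = r * starInner ℓ m f g := by
  simp only [starInner, Pi.smul_apply, smul_eq_mul, mul_assoc, Finset.mul_sum,
    intervalIntegral.integral_const_mul]
  simp only [mul_left_comm r]

lemma starInner_zero_left (ℓ m : ι → ℝ) (g : ι → ℝ → ℝ) : starInner ℓ m 0 g = 0 := by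
  simp [starInner]

lemma integral_deriv_mul_deriv_eq_sub {u φ : ℝ → ℝ} (hu : ContDiff ℝ 2 u) (hφ : ContDiff ℝ 1 φ)
    (p q : ℝ) :
    ∫ x in p..q, deriv u x * deriv φ x =
      deriv u q * φ q - deriv u p * φ p - ∫ x in p..q, deriv (deriv u) x * φ x :=
  have hu' : ContDiff ℝ 1 (deriv u) := ContDiff.deriv' hu
  intervalIntegral.integral_mul_deriv_eq_deriv_mul
    (fun x _ => (hu.differentiable_deriv_two x).hasDerivAt)
    (fun x _ => (hφ.differentiable one_ne_zero x).hasDerivAt)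
    (hu'.continuous_deriv_one.intervalIntegrable p q)
    (hφ.continuous_deriv_one.intervalIntegrable p q)

namespace IsStarSolution

lemma integral_source_mul (hu : IsStarSolution ℓ m μ f a c u) {φ : ℝ → ℝ} (hφ : Continuous φ)
    (i : ι) :
    ∫ x in (0 : ℝ)..ℓ i, f i x * φ x =
      -(∫ x in (0 : ℝ)..ℓ i, deriv (deriv (u i)) x * φ x)
        - μ * ∫ x in (0 : ℝ)..ℓ i, u i x * φ x := by
  have hu' : ContDiff ℝ 1 (deriv (u i)) := ContDiff.deriv' (hu.contDiff i)
  rw [← intervalIntegral.integral_neg, ← intervalIntegral.integral_const_mul,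
    ← intervalIntegral.integral_sub
      ((hu'.continuous_deriv_one.fun_mul hφ).fun_neg.intervalIntegrable _ _)
      (((hu.contDiff i).continuous.fun_mul hφ).const_mul μ |>.intervalIntegrable _ _)]
  refine intervalIntegral.integral_congr fun x hx => ?_
  simp only [← hu.ode i x hx]
  ring

lemma edge_weak_form (hu : IsStarSolution ℓ m μ f a c u) {φ : ℝ → ℝ} (hφ : ContDiff ℝ 1 φ) (i : ι)
    (hend : φ (ℓ i) = 0) :
    ∫ x in (0 : ℝ)..ℓ i, deriv (u i) x * deriv φ x =
      μ * (∫ x in (0 : ℝ)..ℓ i, u i x * φ x) + (∫ x in (0 : ℝ)..ℓ i, f i x * φ x)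
        - deriv (u i) 0 * φ 0 := by
  rw [integral_deriv_mul_deriv_eq_sub (hu.contDiff i) hφ, hend,
    hu.integral_source_mul hφ.continuous]
  ring

lemma weak_form (hu : IsStarSolution ℓ m μ f a c u) (hφ : ∀ i, ContDiff ℝ 1 (φ i))
    (hend : ∀ i, φ i (ℓ i) = 0) (hvertex : ∀ i, φ i 0 = b) :
    starInner ℓ m (fun i => deriv (u i)) (fun i => deriv (φ i)) =
      μ * starInner ℓ m u φ + starInner ℓ m f φ - c * b := by
  simp only [starInner, ← hu.flux_eq, Finset.mul_sum, Finset.sum_mul, ← Finset.sum_add_distrib,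
    ← Finset.sum_sub_distrib]
  refine Finset.sum_congr rfl fun i _ => ?_
  rw [hu.edge_weak_form (hφ i) i (hend i), hvertex i]
  ring

lemma weak_form_of_isStarSolution {g : ι → ℝ → ℝ} {μ' d : ℝ} (hu : IsStarSolution ℓ m μ f a c u)
    (hv : IsStarSolution ℓ m μ' g b d v) :
    starInner ℓ m (fun i => deriv (u i)) (fun i => deriv (v i)) =
      μ * starInner ℓ m u v + starInner ℓ m f v - c * b :=
  hu.weak_form (fun i => (hv.contDiff i).of_le one_le_two) hv.end_eq_zero hv.vertex_eq

lemma starInner_deriv_self (hw : IsStarSolution ℓ m μ 0 a 0 w) :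
    starInner ℓ m (fun i => deriv (w i)) (fun i => deriv (w i)) = μ * starInner ℓ m w w := by
  simpa only [starInner_zero_left, add_zero, zero_mul, sub_zero] using
    hw.weak_form_of_isStarSolution hw

lemma starInner_source_eq (hw : IsStarSolution ℓ m μ 0 a 0 w) (hv : IsStarSolution ℓ m μ f b c v) :
    starInner ℓ m f w = c * a := by
  have hwv := hw.weak_form_of_isStarSolution hv
  have hvw := hv.weak_form_of_isStarSolution hw
  rw [starInner_zero_left, starInner_comm ℓ m w v, starInner_comm] at hwv
  linear_combination hwv - hvw

lemma of_fin_three {ℓ m : Fin 3 → ℝ} {f u : Fin 3 → ℝ → ℝ} (hℓ : ∀ i, 0 ≤ ℓ i)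
    (hreg : ∀ i, ContDiff ℝ 2 (u i))
    (hode : ∀ i, ∀ x ∈ Icc 0 (ℓ i), -(deriv (deriv (u i)) x) - μ * u i x = f i x)
    (hend : ∀ i, u i (ℓ i) = 0) (hvertex : u 0 0 = u 1 0 ∧ u 1 0 = u 2 0)
    (hflux : ∑ i, m i * deriv (u i) 0 = c) :
    IsStarSolution ℓ m μ f (u 0 0) c u where
  contDiff := hreg
  ode i x hx := hode i x (uIcc_of_le (hℓ i) ▸ hx)
  end_eq_zero := hend
  vertex_eq := Fin.forall_fin_succ.2 ⟨rfl, Fin.forall_fin_two.2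
    ⟨hvertex.1.symm, (hvertex.1.trans hvertex.2).symm⟩⟩
  flux_eq := hflux

end IsStarSolution

lemma IsConstEigenpair.isStarSolution {ℓ h : Fin 3 → ℝ} {w : Fin 3 → ℝ → ℝ}
    (hw : IsConstEigenpair ℓ h μ w) (hℓ : ∀ i, 0 ≤ ℓ i) :
    IsStarSolution ℓ (fun i => h i ^ 2) μ 0 (w 0 0) 0 w := by
  obtain ⟨hreg, -, hode, hend, hvertex, hflux⟩ := hw
  refine .of_fin_three hℓ hreg (fun i x hx => ?_) hend hvertex hflux
  simp only [hode i x hx, Pi.zero_apply]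
  ring

theorem corrector_eigenvalue_formula_general (hw : IsStarSolution ℓ m μ 0 a 0 w)
    (hnorm : starInner ℓ m (fun i => deriv (w i)) (fun i => deriv (w i)) = 1)
    (hv : IsStarSolution ℓ m μ (ν • w) b c v) :
    ν = μ * a * c := by
  have hμ : μ * starInner ℓ m w w = 1 := hw.starInner_deriv_self.symm.trans hnorm
  have hν : ν * starInner ℓ m w w = c * a := by
    rw [← starInner_smul_left, hw.starInner_source_eq hv]
  linear_combination μ * hν - ν * hμ

end StarGraph

/-- Derivation of the second term of the eigenvalue asymptotics for `0 < α < 1`: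
if `(ν, (v₁, v₂, v₃))` solves the corrector problem with concentrated mass `κ` at
the normalized eigenpair `(μ₀, w)` of the constant-coefficient limit problem, then
`ν = -κ (μ₀ w₁(0))²`. -/
theorem corrector_eigenvalue_formula
    (ℓ h : Fin 3 → ℝ)
    (hℓ : ∀ i, 0 < ℓ i) (hh : ∀ i, 0 < h i)
    (μ₀ : ℝ) (w : Fin 3 → ℝ → ℝ)
    (hw : IsConstEigenpair ℓ h μ₀ w)
    (hnorm : ∑ i, (h i) ^ 2 * ∫ x in (0 : ℝ)..(ℓ i), (deriv (w i) x) ^ 2 = 1)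
    (κ : ℝ) (hκ : 0 ≤ κ)
    (ν : ℝ) (v : Fin 3 → ℝ → ℝ)
    (hvreg : ∀ i, ContDiff ℝ 2 (v i))
    (hode : ∀ i, ∀ x ∈ Icc 0 (ℓ i),
      -(deriv (deriv (v i)) x) - μ₀ * v i x = ν * w i x)
    (hbc : ∀ i, v i (ℓ i) = 0)
    (hvertex : v 0 0 = v 1 0 ∧ v 1 0 = v 2 0)
    (hkirchhoff : ∑ i, (h i) ^ 2 * deriv (v i) 0 = -κ * μ₀ * w 0 0) :
    ν = -κ * (μ₀ * w 0 0) ^ 2 := by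
  have hℓ' : ∀ i, 0 ≤ ℓ i := fun i => (hℓ i).le
  have hν := corrector_eigenvalue_formula_general (hw.isStarSolution hℓ')
    (by simpa only [starInner, sq] using hnorm)
    (.of_fin_three hℓ' hvreg hode hbc hvertex hkirchhoff)
  linear_combination hν
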